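/- The algebra B(n,r) is isomorphic to the one-point extension of B(n−1,r) by the B(n−1,r)-module rad P(0), where P(0) is the indecomposable projective B(n,r)-module at vertex 0; concretely, B(n,r) ≅ ((1−e₀)B(n,r)(1−e₀))[rad P(0)] and (1−e₀)B(n,r)(1−e₀) ≅ B(n−1,r). -/

import Mathlib

open FreeAlgebra

/-- Generators of the generalized Beilinson algebra `B(n,r)`: the paths of length
zero `e_i` (`vert i`, `i = 0,…,n-1`) and the arrows `γ_s^{(i)} : i → i+1`
(`arr s i`, `s = 1,…,r`, `i = 0,…,n-2`). -/
inductive BGen (n r : ℕ) : Type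
  | vert : Fin n → BGen n r
  | arr : Fin r → Fin (n - 1) → BGen n r

variable (k : Type) [Field k] (n r : ℕ)

def srcV (i : Fin (n - 1)) : Fin n := ⟨i.val, by have := i.isLt; omega⟩
def tgtV (i : Fin (n - 1)) : Fin n := ⟨i.val + 1, by have := i.isLt; omega⟩

/-- The defining relations of `B(n,r)` as a quotient of the free algebra: the `e_i`
are orthogonal idempotents summing to `1`, the arrow `γ_s^{(i)}` runs from vertex `i`
to vertex `i+1`, and consecutive arrows satisfy the commutativity relations
`γ_s^{(i+1)} γ_t^{(i)} = γ_t^{(i+1)} γ_s^{(i)}`. -/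
inductive BRel : FreeAlgebra k (BGen n r) → FreeAlgebra k (BGen n r) → Prop
  | idem (i : Fin n) :
      BRel (ι k (BGen.vert i) * ι k (BGen.vert i)) (ι k (BGen.vert i))
  | orth (i j : Fin n) (h : i ≠ j) :
      BRel (ι k (BGen.vert i) * ι k (BGen.vert j)) 0
  | sum_one : BRel (∑ i : Fin n, ι k (BGen.vert i)) 1
  | tgt_arr (s : Fin r) (i : Fin (n - 1)) :
      BRel (ι k (BGen.vert (tgtV n i)) * ι k (BGen.arr s i)) (ι k (BGen.arr s i))
  | arr_src (s : Fin r) (i : Fin (n - 1)) :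
      BRel (ι k (BGen.arr s i) * ι k (BGen.vert (srcV n i))) (ι k (BGen.arr s i))
  | comm_rel (s t : Fin r) (i j : Fin (n - 1)) (h : (j : ℕ) = (i : ℕ) + 1) :
      BRel (ι k (BGen.arr s j) * ι k (BGen.arr t i))
           (ι k (BGen.arr t j) * ι k (BGen.arr s i))

/-- The generalized Beilinson algebra `B(n,r)`: the path algebra of the Beilinson
quiver modulo the commutativity relations, presented by generators and relations. -/
abbrev Beilinson : Type := RingQuot (BRel k n r)

/-- The idempotent `e₀ ∈ B(n,r)` at vertex `0`. -/
noncomputable def e0 (hn : 0 < n) : Beilinson k n r :=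
  RingQuot.mkAlgHom k (BRel k n r) (ι k (BGen.vert ⟨0, hn⟩))

/-- The indecomposable projective `P(0) = B(n,r)·e₀`, as a left ideal. -/
noncomputable def P0 (hn : 0 < n) : Submodule (Beilinson k n r) (Beilinson k n r) :=
  Submodule.span (Beilinson k n r) {e0 k n r hn}

/-- The Jacobson radical of `B(n,r)` (the intersection of the maximal left ideals). -/
noncomputable def radB : Submodule (Beilinson k n r) (Beilinson k n r) :=
  sInf {J | IsCoatom J}

/-- The radical `rad P(0)` of the projective `P(0)` (for the semiperfect algebra
`B(n,r)` this is `rad B(n,r) ∩ P(0)`). -/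
noncomputable def radP0 (hn : 0 < n) :
    Submodule (Beilinson k n r) (Beilinson k n r) :=
  radB k n r ⊓ P0 k n r hn

namespace BeilinsonAux

section gens

variable {k : Type} [Field k] {n r : ℕ}

/-- The vertex idempotents in `B(n,r)`. -/
noncomputable def vg (i : Fin n) : Beilinson k n r :=
  RingQuot.mkAlgHom k (BRel k n r) (ι k (BGen.vert i))

/-- The arrows in `B(n,r)`. -/
noncomputable def ag (s : Fin r) (i : Fin (n - 1)) : Beilinson k n r :=
  RingQuot.mkAlgHom k (BRel k n r) (ι k (BGen.arr s i))

lemma vg_idem (i : Fin n) : (vg i * vg i : Beilinson k n r) = vg i := by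
  have := RingQuot.mkAlgHom_rel k (BRel.idem (k := k) (r := r) i)
  rwa [map_mul] at this

lemma vg_orth (i j : Fin n) (h : i ≠ j) : (vg i * vg j : Beilinson k n r) = 0 := by
  have := RingQuot.mkAlgHom_rel k (BRel.orth (k := k) (r := r) i j h)
  rwa [map_mul, map_zero] at this

lemma vg_sum : (∑ i, vg i : Beilinson k n r) = 1 := by
  have := RingQuot.mkAlgHom_rel k (BRel.sum_one (k := k) (r := r) (n := n))
  rwa [map_sum, map_one] at this

lemma vg_ag (s : Fin r) (i : Fin (n - 1)) :
    (vg (tgtV n i) * ag s i : Beilinson k n r) = ag s i := by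
  have := RingQuot.mkAlgHom_rel k (BRel.tgt_arr (k := k) s i)
  rwa [map_mul] at this

lemma ag_vg (s : Fin r) (i : Fin (n - 1)) :
    (ag s i * vg (srcV n i) : Beilinson k n r) = ag s i := by
  have := RingQuot.mkAlgHom_rel k (BRel.arr_src (k := k) s i)
  rwa [map_mul] at this

lemma ag_comm (s t : Fin r) (i j : Fin (n - 1)) (h : (j : ℕ) = (i : ℕ) + 1) :
    (ag s j * ag t i : Beilinson k n r) = ag t j * ag s i := by
  have := RingQuot.mkAlgHom_rel k (BRel.comm_rel (k := k) s t i j h)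
  rwa [map_mul, map_mul] at this

/-- Images of the generators. -/
def genMap {A : Type} (v : Fin n → A) (a : Fin r → Fin (n - 1) → A) : BGen n r → A
  | BGen.vert i => v i
  | BGen.arr s i => a s i

/-- The universal property of `B(n,r)`. -/
lemma exists_lift {A : Type} [Ring A] [Algebra k A] (v : Fin n → A)
    (a : Fin r → Fin (n - 1) → A)
    (h1 : ∀ i, v i * v i = v i) (h2 : ∀ i j, i ≠ j → v i * v j = 0) (h3 : ∑ i, v i = 1)
    (h4 : ∀ s i, v (tgtV n i) * a s i = a s i) (h5 : ∀ s i, a s i * v (srcV n i) = a s i)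
    (h6 : ∀ s t (i j : Fin (n - 1)), (j : ℕ) = (i : ℕ) + 1 → a s j * a t i = a t j * a s i) :
    ∃ φ : Beilinson k n r →ₐ[k] A, (∀ i, φ (vg i) = v i) ∧ ∀ s i, φ (ag s i) = a s i := by
  have w : ∀ ⦃x y⦄, BRel k n r x y →
      FreeAlgebra.lift k (genMap v a) x = FreeAlgebra.lift k (genMap v a) y := by
    intro x y h
    induction h with
    | idem i => simpa [genMap] using h1 i
    | orth i j h => simpa [genMap] using h2 i j h
    | sum_one => simpa [genMap] using h3
    | tgt_arr s i => simpa [genMap] using h4 s i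
    | arr_src s i => simpa [genMap] using h5 s i
    | comm_rel s t i j h => simpa [genMap] using h6 s t i j h
  refine ⟨RingQuot.liftAlgHom k ⟨FreeAlgebra.lift k (genMap v a), w⟩, ?_, ?_⟩
  · intro i
    rw [vg, RingQuot.liftAlgHom_mkAlgHom_apply]
    simp [genMap]
  · intro s i
    rw [ag, RingQuot.liftAlgHom_mkAlgHom_apply]
    simp [genMap]

lemma b_induction {P : Beilinson k n r → Prop}
    (hc : ∀ c : k, P (algebraMap k _ c)) (hv : ∀ i, P (vg i)) (ha : ∀ s i, P (ag s i))
    (hmul : ∀ x y, P x → P y → P (x * y)) (hadd : ∀ x y, P x → P y → P (x + y)) (x) : P x := by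
  obtain ⟨y, rfl⟩ := RingQuot.mkAlgHom_surjective k (BRel k n r) x
  induction y using FreeAlgebra.induction with
  | grade0 c => rw [AlgHom.commutes]; exact hc c
  | grade1 g =>
    cases g with
    | vert i => exact hv i
    | arr s i => exact ha s i
  | mul a b h1 h2 => rw [map_mul]; exact hmul _ _ h1 h2
  | add a b h1 h2 => rw [map_add]; exact hadd _ _ h1 h2

lemma vg_mul_ag_ne (s : Fin r) (i : Fin (n - 1)) (j : Fin n) (h : j ≠ tgtV n i) :
    (vg j * ag s i : Beilinson k n r) = 0 := by
  rw [← vg_ag, ← mul_assoc, vg_orth _ _ h, zero_mul]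

lemma ag_mul_vg_ne (s : Fin r) (i : Fin (n - 1)) (j : Fin n) (h : srcV n i ≠ j) :
    (ag s i * vg j : Beilinson k n r) = 0 := by
  rw [← ag_vg, mul_assoc, vg_orth _ _ h, mul_zero]

end gens

section corner

variable {k : Type} [Field k] {A : Type} [Ring A] [Algebra k A]

/-- The scalars of the corner algebra. -/
def cornerHom {f : A} (hf : IsIdempotentElem f) : k →+* hf.Corner where
  toFun c := ⟨c • f, c • f, by
    change f * (c • f) * f = c • f
    rw [mul_smul_comm, hf.eq, smul_mul_assoc, hf.eq]⟩
  map_one' := Subtype.ext (one_smul k f)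
  map_mul' c d := Subtype.ext (by
    change (c * d) • f = (c • f) * (d • f)
    rw [smul_mul_smul_comm, hf.eq])
  map_zero' := Subtype.ext (zero_smul k f)
  map_add' c d := Subtype.ext (add_smul c d f)

/-- The corner of a `k`-algebra is a `k`-algebra. -/
abbrev cornerAlg {f : A} (hf : IsIdempotentElem f) : Algebra k hf.Corner :=
  (cornerHom (k := k) hf).toAlgebra' (by
    intro c x
    apply Subtype.ext
    change (c • f) * x.1 = x.1 * (c • f)
    have := (Subsemigroup.mem_corner_iff hf).mp x.2
    rw [smul_mul_assoc, mul_smul_comm, this.1, this.2])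

/-- Nonunital version of the universal property. -/
lemma exists_lift_corner {n r : ℕ} (f : A) (v : Fin n → A)
    (a : Fin r → Fin (n - 1) → A)
    (h1 : ∀ i, v i * v i = v i) (h2 : ∀ i j, i ≠ j → v i * v j = 0) (h3 : ∑ i, v i = f)
    (h4 : ∀ s i, v (tgtV n i) * a s i = a s i) (h5 : ∀ s i, a s i * v (srcV n i) = a s i)
    (h6 : ∀ s t (i j : Fin (n - 1)), (j : ℕ) = (i : ℕ) + 1 → a s j * a t i = a t j * a s i) :
    ∃ φ : Beilinson k n r →ₗ[k] A, (∀ x y, φ (x * y) = φ x * φ y) ∧ φ 1 = f ∧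
      (∀ i, φ (vg i) = v i) ∧ ∀ s i, φ (ag s i) = a s i := by
  have fv : ∀ i, f * v i = v i := by
    intro i
    rw [← h3, Finset.sum_mul, Finset.sum_eq_single i, h1]
    · intro j _ h; exact h2 _ _ h
    · simp
  have vf : ∀ i, v i * f = v i := by
    intro i
    rw [← h3, Finset.mul_sum, Finset.sum_eq_single i, h1]
    · intro j _ h; exact h2 _ _ h.symm
    · simp
  have hf : IsIdempotentElem f := by
    change f * f = f
    conv_lhs => rw [← h3]
    rw [Finset.sum_mul, ← h3]
    exact Finset.sum_congr rfl fun i _ => by rw [h3, vf]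
  let := cornerAlg (k := k) hf
  have memv : ∀ i, v i ∈ Subsemigroup.corner f := fun i =>
    (Subsemigroup.mem_corner_iff hf).mpr ⟨fv i, vf i⟩
  have mema : ∀ s i, a s i ∈ Subsemigroup.corner f := fun s i =>
    (Subsemigroup.mem_corner_iff hf).mpr
      ⟨by rw [← h4, ← mul_assoc, fv], by rw [← h5, mul_assoc, vf]⟩
  let inc : hf.Corner →+ A := ⟨⟨fun x => x.1, rfl⟩, fun _ _ => rfl⟩
  obtain ⟨φ, hv, ha⟩ := exists_lift (k := k) (A := hf.Corner)
    (fun i => (⟨v i, memv i⟩ : hf.Corner)) (fun s i => (⟨a s i, mema s i⟩ : hf.Corner))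
    (fun i => Subtype.ext (h1 i)) (fun i j h => Subtype.ext (h2 i j h))
    (Subtype.ext ((map_sum inc _ _).trans h3))
    (fun s i => Subtype.ext (h4 s i)) (fun s i => Subtype.ext (h5 s i))
    (fun s t i j h => Subtype.ext (h6 s t i j h))
  refine ⟨{ toFun := fun x => (φ x).1, map_add' := ?_, map_smul' := ?_ }, ?_, ?_, ?_, ?_⟩
  · intro x y; rw [map_add]; rfl
  · intro c x
    rw [map_smul, Algebra.smul_def]
    change (c • f) * (φ x).1 = c • (φ x).1
    rw [smul_mul_assoc, ((Subsemigroup.mem_corner_iff hf).mp (φ x).2).1]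
  · intro x y; change (φ (x * y)).1 = _; rw [map_mul]; rfl
  · change (φ 1).1 = _; rw [map_one]; rfl
  · intro i; change (φ _).1 = _; rw [hv]
  · intro s i; change (φ _).1 = _; rw [ha]

end corner

section maps

variable {k : Type} [Field k] {n r : ℕ}

lemma exists_eps (hn0 : 0 < n) : ∃ ε : Beilinson k n r →ₐ[k] k,
    ε (e0 k n r hn0) = 1 ∧ ∀ x, e0 k n r hn0 * x = ε x • e0 k n r hn0 := by
  obtain ⟨ε, hv, ha⟩ := exists_lift (k := k) (r := r) (A := k)
    (fun i : Fin n => if i = ⟨0, hn0⟩ then 1 else 0) (fun _ _ => 0)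
    (by intro i; simp)
    (by intro i j h; by_cases hi : i = ⟨0, hn0⟩
        · subst hi; simp [Ne.symm h]
        · simp [hi])
    (by simp) (by simp) (by simp) (by simp)
  refine ⟨ε, (hv ⟨0, hn0⟩).trans (if_pos rfl), ?_⟩
  have he : e0 k n r hn0 = vg ⟨0, hn0⟩ := rfl
  rw [he]
  apply b_induction
  · intro c
    rw [AlgHom.commutes, ← Algebra.commutes, ← Algebra.smul_def]; rfl
  · intro i
    rw [hv]
    by_cases hi : i = ⟨0, hn0⟩
    · subst hi; simp [vg_idem]
    · rw [vg_orth _ _ (Ne.symm hi)]; simp [hi]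
  · intro s i
    rw [ha, vg_mul_ag_ne, zero_smul]
    intro h
    have := congrArg Fin.val h
    simp [tgtV] at this
  · intro x y hx hy
    rw [← mul_assoc, hx, smul_mul_assoc, hy, smul_smul, map_mul]
  · intro x y hx hy
    rw [mul_add, hx, hy, map_add, add_smul]

/-- Index shift: vertices. -/
def dn (i : Fin n) (h : i.val ≠ 0) : Fin (n - 1) := ⟨i.val - 1, by have := i.isLt; omega⟩

/-- Index shift back. -/
def up (i : Fin (n - 1)) : Fin n := ⟨i.val + 1, by have := i.isLt; omega⟩

lemma sum_up {M : Type} [AddCommMonoid M] (hn0 : 0 < n) (g : Fin n → M) :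
    ∑ i, g i = g ⟨0, hn0⟩ + ∑ i : Fin (n - 1), g (up i) := by
  obtain ⟨m, rfl⟩ : ∃ m, n = m + 1 := ⟨n - 1, by omega⟩
  exact Fin.sum_univ_succ g

lemma exists_psi (hn0 : 0 < n) : ∃ ψ : Beilinson k (n - 1) r →ₗ[k] Beilinson k n r,
    (∀ a b, ψ (a * b) = ψ a * ψ b) ∧ ψ 1 = 1 - e0 k n r hn0 ∧
    (∀ i, ψ (vg i) = vg (up i)) ∧ ∀ s i, ψ (ag s i) = ag s (up i) := by
  apply exists_lift_corner
  · intro i; exact vg_idem _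
  · intro i j h
    apply vg_orth
    intro h'
    apply h
    have := congrArg Fin.val h'
    simp [up] at this
    exact Fin.ext this
  · rw [eq_sub_iff_add_eq', ← vg_sum, sum_up hn0]; rfl
  · intro s i
    exact vg_ag s (up i)
  · intro s i
    exact ag_vg s (up i)
  · intro s t i j h
    exact ag_comm s t _ _ (by simp [up, h])

lemma exists_pi (hn0 : 0 < n) : ∃ π : Beilinson k n r →ₐ[k] Beilinson k (n - 1) r,
    π (vg ⟨0, hn0⟩) = 0 ∧ (∀ i, π (vg (up i)) = vg i) ∧
    (∀ s (i : Fin (n - 1)), i.val = 0 → π (ag s i) = 0) ∧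
    ∀ s i, π (ag s (up i)) = ag s i := by
  obtain ⟨π, hv, ha⟩ := exists_lift (k := k) (A := Beilinson k (n - 1) r)
    (fun i : Fin n => if h : i.val ≠ 0 then vg (dn i h) else 0)
    (fun (s : Fin r) (i : Fin (n - 1)) => if h : i.val ≠ 0 then ag s (dn i h) else 0)
    (by
      intro i
      by_cases h : i.val ≠ 0
      · simp only [dif_pos h]; exact vg_idem _
      · simp only [dif_neg h]; simp)
    (by
      intro i j hij
      by_cases h : i.val ≠ 0
      · by_cases h' : j.val ≠ 0
        · simp only [dif_pos h, dif_pos h']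
          apply vg_orth
          intro e
          have := congrArg Fin.val e
          simp only [dn] at this
          exact hij (Fin.ext (by omega))
        · simp only [dif_neg h', mul_zero]
      · simp only [dif_neg h, zero_mul])
    (by
      rw [sum_up hn0, ← vg_sum]
      simp only [ne_eq, not_true_eq_false, dite_false, zero_add]
      refine Finset.sum_congr rfl fun i _ => ?_
      rw [dif_pos (by simp [up])]
      congr 1)
    (by
      intro s i
      by_cases h : i.val ≠ 0
      · have h' : (tgtV n i).val ≠ 0 := by simp [tgtV]
        simp only [dif_pos h, dif_pos h']
        convert vg_ag s (dn i h) using 3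
        apply Fin.ext
        change i.val + 1 - 1 = i.val - 1 + 1
        omega
      · simp only [dif_neg h, mul_zero])
    (by
      intro s i
      by_cases h : i.val ≠ 0
      · have h' : (srcV n i).val ≠ 0 := h
        simp only [dif_pos h, dif_pos h']
        exact ag_vg s (dn i h)
      · simp only [dif_neg h, zero_mul])
    (by
      intro s t i j h
      by_cases hi : i.val ≠ 0
      · have hj : j.val ≠ 0 := by omega
        simp only [dif_pos hi, dif_pos hj]
        exact ag_comm s t _ _ (by simp [dn]; omega)
      · simp only [dif_neg hi, mul_zero])
  refine ⟨π, ?_, ?_, ?_, ?_⟩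
  · rw [hv]; simp
  · intro i; rw [hv, dif_pos (by simp [up])]; rfl
  · intro s i h; rw [ha]; simp [h]
  · intro s i; rw [ha, dif_pos (by simp [up])]; rfl

end maps

section main

variable {k : Type} [Field k] {n r : ℕ}

lemma e0_idem (hn0 : 0 < n) : e0 k n r hn0 * e0 k n r hn0 = e0 k n r hn0 := vg_idem _

lemma mem_radP0 (hn0 : 0 < n) (ε : Beilinson k n r →ₐ[k] k)
    (hε1 : ε (e0 k n r hn0) = 1) (hε : ∀ x, e0 k n r hn0 * x = ε x • e0 k n r hn0)
    (m : Beilinson k n r) :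
    m ∈ radP0 k n r hn0 ↔ m * e0 k n r hn0 = m ∧ e0 k n r hn0 * m = 0 := by
  have hP : m ∈ P0 k n r hn0 ↔ m * e0 k n r hn0 = m := by
    rw [P0, Submodule.mem_span_singleton]
    constructor
    · rintro ⟨a, rfl⟩
      rw [smul_eq_mul, mul_assoc, e0_idem]
    · intro h; exact ⟨m, h⟩
  rw [radP0, Submodule.mem_inf, hP, and_comm, and_congr_right_iff]
  intro hm
  rw [radB, Submodule.mem_sInf]
  constructor
  · intro h
    let K : Submodule (Beilinson k n r) (Beilinson k n r) :=
      { carrier := {x | ε x = 0}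
        add_mem' := by
          intro a b ha hb
          simp only [Set.mem_ofPred_eq] at *
          rw [map_add, ha, hb, add_zero]
        zero_mem' := map_zero ε
        smul_mem' := by
          intro c x hx
          simp only [Set.mem_ofPred_eq, smul_eq_mul] at *
          rw [map_mul, hx, mul_zero] }
    have hK : IsCoatom K := by
      constructor
      · intro h
        have : (1 : Beilinson k n r) ∈ K := h ▸ Submodule.mem_top
        have h1 : ε 1 = 0 := this
        rw [map_one] at h1
        exact one_ne_zero h1
      · intro J hJ
        obtain ⟨y, hy, hyK⟩ := SetLike.exists_of_lt hJ
        have hy0 : ε y ≠ 0 := hyK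
        rw [Ideal.eq_top_iff_one J]
        have h1 : 1 - algebraMap k _ (ε y)⁻¹ * y ∈ J := by
          apply hJ.le
          change ε _ = 0
          rw [map_sub, map_mul, AlgHom.commutes, map_one]
          simp [hy0]
        have h2 : algebraMap k _ (ε y)⁻¹ * y ∈ J := J.smul_mem _ hy
        simpa using J.add_mem h1 h2
    have : ε m = 0 := h K hK
    rw [hε, this, zero_smul]
  · intro hem J hJ
    by_contra hmJ
    have htop : J ⊔ Submodule.span _ {m} = ⊤ := by
      apply hJ.2
      rw [left_lt_sup, Submodule.span_singleton_le_iff_mem]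
      exact hmJ
    have h1 : (1 : Beilinson k n r) ∈ J ⊔ Submodule.span _ {m} := htop ▸ Submodule.mem_top
    obtain ⟨j, hj, z, hz, hjz⟩ := Submodule.mem_sup.mp h1
    obtain ⟨b, rfl⟩ := Submodule.mem_span_singleton.mp hz
    rw [smul_eq_mul] at hjz
    have hmb : m * b * m = 0 := by
      have hb : e0 k n r hn0 * b * m = 0 := by
        rw [hε, smul_mul_assoc, hem, smul_zero]
      calc m * b * m = (m * e0 k n r hn0) * b * m := by rw [hm]
        _ = m * (e0 k n r hn0 * b * m) := by simp only [mul_assoc]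
        _ = 0 := by rw [hb, mul_zero]
    have hmm : m = m * j := by
      calc m = m * (j + b * m) := by rw [hjz, mul_one]
        _ = m * j + m * b * m := by rw [mul_add, mul_assoc]
        _ = m * j := by rw [hmb, add_zero]
    apply hmJ
    rw [hmm]
    exact J.smul_mem _ hj

end main

end BeilinsonAux

open BeilinsonAux

/-- `B(n,r)` is the one-point extension of `B(n-1,r)` by
`rad P(0)`: (i) the corner algebra `(1-e₀)B(n,r)(1-e₀)` is isomorphic to `B(n-1,r)`
(via a multiplicative `k`-linear embedding `ψ` with image the corner and `ψ(1) = 1-e₀`),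
and (ii) letting `B(n-1,r)` act on `rad P(0)` through `ψ` (the algebra map
`ρ : B(n-1,r) → End_k(rad P(0))`), there is a `k`-linear bijection
`Φ : B(n,r) ≅ B(n-1,r) × rad P(0) × k` that is unital and carries the multiplication
of `B(n,r)` to the one-point-extension matrix multiplication
`(a,m,λ)(a',m',λ') = (aa', a·m' + λ'm, λλ')`. -/
theorem beilinson_one_point_extension {k : Type} [Field k] [IsAlgClosed k] {n r : ℕ}
    (hn : 3 ≤ n) (hn0 : 0 < n) (hr : 2 ≤ r) :
    ∃ ψ : Beilinson k (n - 1) r →ₗ[k] Beilinson k n r,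
      (∀ a b, ψ (a * b) = ψ a * ψ b) ∧
      ψ 1 = 1 - e0 k n r hn0 ∧
      Function.Injective ψ ∧
      Set.range ψ = {x | (1 - e0 k n r hn0) * x * (1 - e0 k n r hn0) = x} ∧
      ∃ ρ : Beilinson k (n - 1) r →ₐ[k] Module.End k (radP0 k n r hn0),
        (∀ (a : Beilinson k (n - 1) r) (m : radP0 k n r hn0),
          (ρ a m : Beilinson k n r) = ψ a * (m : Beilinson k n r)) ∧
        ∃ Φ : Beilinson k n r ≃ₗ[k]
            (Beilinson k (n - 1) r × radP0 k n r hn0 × k),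
          Φ 1 = (1, 0, 1) ∧
          ∀ x y, Φ (x * y) =
            ((Φ x).1 * (Φ y).1,
             ρ (Φ x).1 (Φ y).2.1 + (Φ y).2.2 • (Φ x).2.1,
             (Φ x).2.2 * (Φ y).2.2) := by
  obtain ⟨ε, hε1, hε⟩ := exists_eps (k := k) (r := r) hn0
  obtain ⟨ψ, hψm, hψ1, hψv, hψa⟩ := exists_psi (k := k) (r := r) hn0
  obtain ⟨π, hπ0, hπv, hπa0, hπa⟩ := exists_pi (k := k) (r := r) hn0
  have hmem := mem_radP0 (k := k) (r := r) hn0 ε hε1 hε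
  have hee := e0_idem (k := k) (r := r) hn0
  have hπe : π (e0 k n r hn0) = 0 := hπ0
  have hev : e0 k n r hn0 = vg ⟨0, hn0⟩ := rfl
  generalize e0 k n r hn0 = e at *
  have hψe : ∀ a, ψ a * e = 0 := by
    intro a
    have : ψ a * (1 - e) = ψ a := by rw [← hψ1, ← hψm, mul_one]
    rw [← this, mul_assoc, sub_mul, hee, one_mul, sub_self, mul_zero]
  have heψ : ∀ a, e * ψ a = 0 := by
    intro a
    have : (1 - e) * ψ a = ψ a := by rw [← hψ1, ← hψm, one_mul]
    rw [← this, ← mul_assoc, mul_sub, hee, mul_one, sub_self, zero_mul]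
  have hψπ : ∀ x, ψ (π x) = x * (1 - e) := by
    apply b_induction
    · intro c
      rw [AlgHom.commutes, Algebra.algebraMap_eq_smul_one, map_smul, hψ1, ← Algebra.smul_def]
    · intro i
      by_cases h : i.val = 0
      · have : i = ⟨0, hn0⟩ := Fin.ext h
        subst this
        rw [hπ0, map_zero, ← hev, mul_sub, hee, mul_one, sub_self]
      · have hi : i = up (dn i h) := Fin.ext (by simp [up, dn]; omega)
        rw [hi, hπv, hψv, hev, mul_sub, mul_one, vg_orth, sub_zero]
        intro h'
        have := congrArg Fin.val h'
        simp [up] at this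
    · intro s i
      by_cases h : i.val = 0
      · have hi : srcV n i = ⟨0, hn0⟩ := Fin.ext h
        rw [hπa0 s i h, map_zero, hev, ← hi, mul_sub, ag_vg, mul_one, sub_self]
      · have hi : i = up (dn i h) := Fin.ext (by simp [up, dn]; omega)
        rw [hi, hπa, hψa, hev, mul_sub, mul_one, ag_mul_vg_ne, sub_zero]
        intro h'
        have := congrArg Fin.val h'
        simp [up, srcV] at this
    · intro x y hx hy
      have key : (1 - e) * (y * (1 - e)) = y * (1 - e) := by
        rw [sub_mul, one_mul, ← hy, heψ, sub_zero]
      rw [map_mul, hψm, hx, hy, mul_assoc, key, mul_assoc]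
    · intro x y hx hy
      rw [map_add, map_add, hx, hy, add_mul]
  have hπψ : ∀ a, π (ψ a) = a := by
    apply b_induction
    · intro c
      rw [Algebra.algebraMap_eq_smul_one, map_smul, map_smul, hψ1, map_sub, hπe, map_one, sub_zero]
    · intro i; rw [hψv, hπv]
    · intro s i; rw [hψa, hπa]
    · intro x y hx hy; rw [hψm, map_mul, hx, hy]
    · intro x y hx hy; rw [map_add, map_add, hx, hy]
  have hεψ : ∀ a, ε (ψ a) = 0 := by
    intro a
    have := congrArg ε (heψ a)
    rwa [map_mul, hε1, one_mul, map_zero] at this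
  have hm1 : ∀ m ∈ radP0 k n r hn0, m * e = m := fun m hm => ((hmem m).1 hm).1
  have hm2 : ∀ m ∈ radP0 k n r hn0, e * m = 0 := fun m hm => ((hmem m).1 hm).2
  have hmε : ∀ m ∈ radP0 k n r hn0, ε m = 0 := by
    intro m hm
    have := congrArg ε (hm2 m hm)
    rwa [map_mul, hε1, one_mul, map_zero] at this
  have hmπ : ∀ m ∈ radP0 k n r hn0, π m = 0 := by
    intro m hm
    rw [← hm1 m hm, map_mul, hπe, mul_zero]
  refine ⟨ψ, hψm, hψ1, fun a b h => by rw [← hπψ a, h, hπψ], ?_, ?_⟩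
  · ext x
    constructor
    · rintro ⟨a, rfl⟩
      change (1 - e) * ψ a * (1 - e) = ψ a
      rw [← hψ1, ← hψm, ← hψm, one_mul, mul_one]
    · intro hx
      refine ⟨π x, ?_⟩
      have hx' : (1 - e) * x * (1 - e) = x := hx
      rw [hψπ]
      calc x * (1 - e) = (1 - e) * (x * (1 - e)) := by
            rw [← hψπ, sub_mul, one_mul, heψ, sub_zero]
        _ = x := by rw [← mul_assoc, hx']
  let ρl : Beilinson k (n - 1) r →ₗ[k] Module.End k (radP0 k n r hn0) :=
    LinearMap.mk₂ k (fun a m => ψ a • m)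
      (fun a b m => by rw [map_add, add_smul])
      (fun c a m => by rw [map_smul, smul_assoc])
      (fun a m m' => smul_add _ _ _)
      (fun c a m => Subtype.ext (mul_smul_comm c (ψ a) (m : Beilinson k n r)))
  have hρl : ∀ a (m : radP0 k n r hn0), (ρl a m : Beilinson k n r) = ψ a * m := fun _ _ => rfl
  let ρ : Beilinson k (n - 1) r →ₐ[k] Module.End k (radP0 k n r hn0) :=
    AlgHom.ofLinearMap ρl
      (by
        ext m
        rw [hρl, hψ1, sub_mul, one_mul, hm2 m m.2, sub_zero]; rfl)
      (by
        intro a b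
        ext m
        rw [hρl, hψm, Module.End.mul_apply, hρl, hρl, mul_assoc])
  have hρ : ∀ a (m : radP0 k n r hn0), (ρ a m : Beilinson k n r) = ψ a * m := fun _ _ => rfl
  refine ⟨ρ, hρ, ?_⟩
  have hfxe : ∀ x, x * e - ε x • e ∈ radP0 k n r hn0 := by
    intro x
    rw [hmem]
    constructor
    · rw [sub_mul, mul_assoc, hee, smul_mul_assoc, hee]
    · rw [mul_sub, ← mul_assoc, hε, mul_smul_comm, smul_mul_assoc, hee, sub_self]
  let Φ : Beilinson k n r ≃ₗ[k] (Beilinson k (n - 1) r × radP0 k n r hn0 × k) :=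
    { toFun := fun x => (π x, ⟨x * e - ε x • e, hfxe x⟩, ε x)
      map_add' := by
        intro x y
        refine Prod.ext (map_add π x y) (Prod.ext (Subtype.ext ?_) (map_add ε x y))
        change (x + y) * e - ε (x + y) • e = (x * e - ε x • e) + (y * e - ε y • e)
        rw [map_add, add_mul, add_smul]; abel
      map_smul' := by
        intro c x
        refine Prod.ext (map_smul π c x) (Prod.ext (Subtype.ext ?_) (map_smul ε c x))
        change (c • x) * e - ε (c • x) • e = c • (x * e - ε x • e)
        rw [map_smul, smul_sub, smul_mul_assoc, smul_assoc]
      invFun := fun p => ψ p.1 + p.2.1 + p.2.2 • e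
      left_inv := by
        intro x
        change ψ (π x) + (x * e - ε x • e) + ε x • e = x
        rw [hψπ, mul_sub, mul_one]; abel
      right_inv := by
        rintro ⟨a, ⟨m, hm⟩, c⟩
        have h1 : π (ψ a + m + c • e) = a := by
          rw [map_add, map_add, map_smul, hπψ, hmπ m hm, hπe, smul_zero, add_zero, add_zero]
        have h2 : ε (ψ a + m + c • e) = c := by
          rw [map_add, map_add, map_smul, hεψ, hmε m hm, hε1]; simp
        refine Prod.ext h1 (Prod.ext (Subtype.ext ?_) h2)
        change (ψ a + m + c • e) * e - ε (ψ a + m + c • e) • e = m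
        rw [h2, add_mul, add_mul, hψe, hm1 m hm, smul_mul_assoc, hee]; abel }
  have hΦ : ∀ x, Φ x = (π x, ⟨x * e - ε x • e, hfxe x⟩, ε x) := fun _ => rfl
  refine ⟨Φ, ?_, ?_⟩
  · rw [hΦ]
    refine Prod.ext (map_one π) (Prod.ext (Subtype.ext ?_) (map_one ε))
    change 1 * e - ε 1 • e = 0
    rw [map_one, one_smul, one_mul, sub_self]
  · intro x y
    simp only [hΦ]
    refine Prod.ext (map_mul π x y) (Prod.ext (Subtype.ext ?_) (map_mul ε x y))
    change x * y * e - ε (x * y) • e =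
      ψ (π x) * (y * e - ε y • e) + ε y • (x * e - ε x • e)
    have h0 : e * (y * e - ε y • e) = 0 := hm2 _ (hfxe y)
    rw [hψπ, mul_assoc x (1 - e), sub_mul 1 e, h0, one_mul, sub_zero, mul_sub, map_mul,
      mul_smul_comm, smul_sub, smul_smul, mul_comm (ε y), mul_assoc]
    abel
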